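/- Let A be a nonempty finite set and α > 0. Define the softmax map σ_α : ℝ^A → Δ(A) by σ_α(q)(a) = exp(q(a)/α) / ∑_{b∈A} exp(q(b)/α). Then σ_α is (1/α)-Lipschitz from the sup norm to the ℓ¹ norm: for all q₁, q₂ ∈ ℝ^A, ‖σ_α(q₁) − σ_α(q₂)‖₁ ≤ (1/α)·‖q₁ − q₂‖_∞. -/

import Mathlib

open scoped BigOperators

lemma softmax_aux (t a b c d : ℝ) (ht : 1 ≤ t) (ha : 0 ≤ a) (hb : 0 ≤ b) (hc : 0 ≤ c)
    (hd : 0 ≤ d) (hab : 0 < a + b) (hcd : 0 < c + d) (h1 : a ≤ t * c) (h2 : d ≤ t * b) :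
    a / (a + b) - c / (c + d) ≤ (t - 1) / (t + 1) := by
  rw [div_sub_div _ _ hab.ne' hcd.ne', div_le_div_iff₀ (by positivity) (by positivity)]
  have ht0 : 0 < t := by linarith
  have e1 : a * a ≤ t * (a * c) := by nlinarith
  have e2 : d * d ≤ t * (b * d) := by nlinarith
  have e3 : a * d ≤ (t * c) * (t * b) := mul_le_mul h1 h2 hd (by positivity)
  have e4 : 2 * (a * d) ≤ a * a + d * d := by nlinarith [sq_nonneg (a - d)]
  have e5 : (t - 1) * (2 * (a * d)) ≤ (t - 1) * (t * (a * c) + t * (b * d)) :=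
    mul_le_mul_of_nonneg_left (by linarith) (by linarith)
  have key : t * (2 * (a * d)) ≤ t * ((t - 1) * (a * c + b * d) + 2 * t * (b * c)) := by
    nlinarith
  have := le_of_mul_le_mul_left key ht0
  nlinarith

/-- The softmax map `σ_α(q)(a) = exp(q(a)/α) / ∑_b exp(q(b)/α)` is
`(1/α)`-Lipschitz from the sup norm to the ℓ¹ norm:
`‖σ_α(q₁) - σ_α(q₂)‖₁ ≤ (1/α) ‖q₁ - q₂‖_∞`. -/
theorem stmt15 {A : Type*} [Fintype A] [Nonempty A]
    (α : ℝ) (hα : 0 < α)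
    (σ : (A → ℝ) → A → ℝ)
    (hσ : ∀ (q : A → ℝ) (a : A),
      σ q a = Real.exp (q a / α) / ∑ b, Real.exp (q b / α)) :
    ∀ q₁ q₂ : A → ℝ,
      ∑ a, |σ q₁ a - σ q₂ a| ≤ (1 / α) * ⨆ a : A, |q₁ a - q₂ a| := by
  intro q₁ q₂
  classical
  set M := (1 / α) * ⨆ a : A, |q₁ a - q₂ a| with hM
  have hle : ∀ a, |q₁ a - q₂ a| / α ≤ M := fun a => by
    rw [hM, one_div, div_eq_inv_mul]
    exact mul_le_mul_of_nonneg_left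
      (le_ciSup (f := fun a : A => |q₁ a - q₂ a|) (Set.finite_range _).bddAbove a)
      (by positivity)
  have hM0 : 0 ≤ M := le_trans (by positivity) (hle (Classical.arbitrary A))
  have hpos : ∀ q : A → ℝ, 0 < ∑ b, Real.exp (q b / α) := fun q =>
    Finset.sum_pos (fun _ _ => Real.exp_pos _) Finset.univ_nonempty
  have hsum : ∀ q, ∑ a, σ q a = 1 := fun q => by
    simp_rw [hσ]
    rw [← Finset.sum_div, div_self (hpos q).ne']
  have h12 : ∀ a, Real.exp (q₁ a / α) ≤ Real.exp M * Real.exp (q₂ a / α) := fun a => by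
    rw [← Real.exp_add, Real.exp_le_exp]
    have h := (div_le_div_of_nonneg_right (le_abs_self (q₁ a - q₂ a)) hα.le).trans (hle a)
    rw [sub_div] at h
    linarith
  have h21 : ∀ a, Real.exp (q₂ a / α) ≤ Real.exp M * Real.exp (q₁ a / α) := fun a => by
    rw [← Real.exp_add, Real.exp_le_exp]
    have h := (div_le_div_of_nonneg_right (neg_abs_le (q₁ a - q₂ a)) hα.le)
    have h' := hle a
    rw [sub_div, neg_div] at h
    linarith
  have ht : 1 ≤ Real.exp M := Real.one_le_exp hM0
  let S : Finset A := Finset.univ.filter fun a => 0 < σ q₁ a - σ q₂ a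
  have hsplit : ∀ q : A → ℝ, ∑ b, Real.exp (q b / α) =
      ∑ b ∈ S, Real.exp (q b / α) + ∑ b ∈ Sᶜ, Real.exp (q b / α) := fun q =>
    (Finset.sum_add_sum_compl S _).symm
  have habs : ∑ a, |σ q₁ a - σ q₂ a| = 2 * (∑ a ∈ S, σ q₁ a - ∑ a ∈ S, σ q₂ a) := by
    have e : ∀ a, |σ q₁ a - σ q₂ a| =
        2 * (if 0 < σ q₁ a - σ q₂ a then σ q₁ a - σ q₂ a else 0) - (σ q₁ a - σ q₂ a) := by
      intro a
      split_ifs with h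
      · rw [abs_of_pos h]; ring
      · rw [abs_of_nonpos (not_lt.mp h)]; ring
    rw [Finset.sum_congr rfl fun a _ => e a, Finset.sum_sub_distrib, ← Finset.mul_sum,
      ← Finset.sum_filter, Finset.sum_sub_distrib, Finset.sum_sub_distrib, hsum, hsum]
    simp [S]
  have hS : ∀ q, ∑ a ∈ S, σ q a = (∑ b ∈ S, Real.exp (q b / α)) /
      (∑ b ∈ S, Real.exp (q b / α) + ∑ b ∈ Sᶜ, Real.exp (q b / α)) := fun q => by
    rw [← hsplit, Finset.sum_div]
    exact Finset.sum_congr rfl fun a _ => hσ q a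
  have nn : ∀ (T : Finset A) (q : A → ℝ), 0 ≤ ∑ b ∈ T, Real.exp (q b / α) := fun T q =>
    Finset.sum_nonneg fun _ _ => (Real.exp_pos _).le
  have main := softmax_aux (Real.exp M) _ _ _ _ ht (nn S q₁) (nn Sᶜ q₁) (nn S q₂) (nn Sᶜ q₂)
    (by rw [← hsplit]; exact hpos _) (by rw [← hsplit]; exact hpos _)
    (by rw [Finset.mul_sum]; exact Finset.sum_le_sum fun a _ => h12 a)
    (by rw [Finset.mul_sum]; exact Finset.sum_le_sum fun a _ => h21 a)
  rw [← hS, ← hS] at main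
  have hlog := Real.le_log_one_add_of_nonneg (x := Real.exp M - 1) (by linarith)
  rw [add_sub_cancel, Real.log_exp, show Real.exp M - 1 + 2 = Real.exp M + 1 by ring,
    mul_div_assoc] at hlog
  rw [habs]
  linarith
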